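/- arXiv:1412.0646 — 2 statements merged into one kernel-verified Lean document; each statement's English description precedes it below -/
import Mathlib

section
/- Let π, ρ be permutations of a finite set I. The following are equivalent: (1) π and ρ have a common upper bound in the noncrossing partial order ⪯; (2) they have a common upper bound σ with Π(σ) = Π(π) ∨ Π(ρ); (3) they have a common upper bound lying on a geodesic between π and ρ in the Cayley graph generated by transpositions; (4) #(π) + #(ρ) + #(ρπ⁻¹) − |I| = 2·#(Π(π) ∨ Π(ρ)) (i.e., π is planar on ρ⁻¹). -/
/-- The number of cycles (orbits, including fixed points) of a permutation. -/
noncomputable def cycleCount {I : Type*} (σ : Equiv.Perm I) : ℕ :=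
  Nat.card (MulAction.orbitRel.Quotient (Subgroup.zpowers σ) I)

/-- The number of blocks of the join of the orbit partitions of two permutations. -/
noncomputable def jointOrbitCount {I : Type*} (π₁ π₂ : Equiv.Perm I) : ℕ :=
  Nat.card (MulAction.orbitRel.Quotient
    (Subgroup.closure {π₁, π₂} : Subgroup (Equiv.Perm I)) I)

/-- The distance in the Cayley graph of the symmetric group with all
transpositions as generators: d(π,ρ) = |I| − #(ρπ⁻¹). -/
noncomputable def cayleyDist {I : Type*} [Fintype I] (π ρ : Equiv.Perm I) : ℕ :=
  Fintype.card I - cycleCount (ρ * π⁻¹)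

/-- The noncrossing partial order: π ⪯ ρ iff π lies on a geodesic from the
identity to ρ. -/
def NCLe {I : Type*} [Fintype I] (π ρ : Equiv.Perm I) : Prop :=
  cayleyDist 1 π + cayleyDist π ρ = cayleyDist 1 ρ

/-!
Two facts about partitions drive the proof. The functions constant on the blocks of `r ⊔ s` are
those constant on the blocks of `r` and of `s`, so the rank `|I| − #blocks` is subadditive; hence
`cayleyDist` is a metric. A transposition joining two cycles of `π` merges the two corresponding
blocks of `Π(π)` and does nothing else.

The double genus `d(1, π) + d(1, ρ) + d(π, ρ) − 2 rk(Π(π) ∨ Π(ρ))` does not decrease when a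
transposition joins two cycles of `π`. It vanishes at `(1, ρ)` and at `(σ, σ)`, so a common upper
bound `σ` of `π` and `ρ` squeezes it to zero at `(π, ρ)`. Conversely, moving `π` towards `ρ` by
transpositions that join cycles of `π` preserves the double genus and ends at some `σ` with
`Π(σ) = Π(π) ∨ Π(ρ)`; if the double genus is zero, this `σ` is also above `ρ`.
-/

section

open Equiv Equiv.Perm Relation

variable {I : Type*}

section Rank

/-- The space of rational functions constant on the classes of `r`. Its dimension is the number of
classes, and it turns joins of partitions into intersections of subspaces. -/
def classFunctions (r : Setoid I) : Submodule ℚ (I → ℚ) where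
  carrier := {f | r ≤ Setoid.ker f}
  zero_mem' _ _ _ := rfl
  add_mem' hf hg _ _ h := congrArg₂ (· + ·) (hf h) (hg h)
  smul_mem' c _ hf _ _ h := congrArg (c * ·) (hf h)

lemma mem_classFunctions {r : Setoid I} {f : I → ℚ} : f ∈ classFunctions r ↔ r ≤ Setoid.ker f :=
  Iff.rfl

lemma classFunctions_sup (r s : Setoid I) :
    classFunctions (r ⊔ s) = classFunctions r ⊓ classFunctions s := by
  ext f
  exact sup_le_iff (a := r) (b := s) (c := Setoid.ker f)

lemma finrank_classFunctions [Finite I] (r : Setoid I) :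
    Module.finrank ℚ (classFunctions r) = Nat.card (Quotient r) := by
  have := Fintype.ofFinite (Quotient r)
  let e : classFunctions r ≃ₗ[ℚ] (Quotient r → ℚ) :=
    { Setoid.liftEquiv r with
      map_add' := fun _ _ => funext <| Quotient.ind fun _ => rfl
      map_smul' := fun _ _ => funext <| Quotient.ind fun _ => rfl }
  rw [e.finrank_eq, Module.finrank_fintype_fun_eq_card, Nat.card_eq_fintype_card]

variable [Fintype I]

/-- The rank of `r` in the lattice of partitions of `I`: the number of points minus the number of
classes, where the truncated subtraction is exact. -/
noncomputable def setoidRank (r : Setoid I) : ℕ :=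
  Fintype.card I - Nat.card (Quotient r)

lemma setoidRank_add_card_quotient (r : Setoid I) :
    setoidRank r + Nat.card (Quotient r) = Fintype.card I := by
  refine Nat.sub_add_cancel ?_
  rw [← Nat.card_eq_fintype_card]
  exact Nat.card_le_card_of_surjective (Quotient.mk r) Quotient.mk_surjective

lemma setoidRank_add_finrank_classFunctions (r : Setoid I) :
    setoidRank r + Module.finrank ℚ (classFunctions r) = Fintype.card I := by
  rw [finrank_classFunctions, setoidRank_add_card_quotient]

lemma setoidRank_bot : setoidRank (⊥ : Setoid I) = 0 := by
  have hcard : Nat.card (Quotient (⊥ : Setoid I)) = Fintype.card I := by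
    rw [Nat.card_congr Setoid.quotientBotEquiv, Nat.card_eq_fintype_card]
  rw [setoidRank, hcard, Nat.sub_self]

lemma setoidRank_strictMono : StrictMono (setoidRank : Setoid I → ℕ) := by
  intro r s hrs
  let p : Quotient r → Quotient s := Quotient.map' id fun _ _ h => hrs.le h
  have hp : Function.Surjective p := Quotient.ind fun x => ⟨Quotient.mk r x, rfl⟩
  have hcard : Nat.card (Quotient s) < Nat.card (Quotient r) := by
    by_contra! hle
    have hinj := (hp.bijective_of_nat_card_le hle).injective
    exact hrs.not_ge fun x y h => Quotient.exact (hinj (Quotient.sound h : p ⟦x⟧ = p ⟦y⟧))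
  have hr := setoidRank_add_card_quotient r
  have hs := setoidRank_add_card_quotient s
  lia

lemma setoidRank_sup_le (r s : Setoid I) :
    setoidRank (r ⊔ s) ≤ setoidRank r + setoidRank s := by
  have hdim := Submodule.finrank_sup_add_finrank_inf_eq (classFunctions r) (classFunctions s)
  rw [← classFunctions_sup] at hdim
  have hle := Submodule.finrank_le (classFunctions r ⊔ classFunctions s)
  rw [Module.finrank_fintype_fun_eq_card] at hle
  have hr := setoidRank_add_finrank_classFunctions r
  have hs := setoidRank_add_finrank_classFunctions s
  have hrs := setoidRank_add_finrank_classFunctions (r ⊔ s)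
  lia

end Rank

section CyclePartition

/-- The group of permutations that map every point into its own class of `s`. It turns statements
about orbit partitions being finer than `s` into statements about membership in a subgroup. -/
def classPreserving (s : Setoid I) : Subgroup (Perm I) where
  carrier := {g | ∀ x, s x (g x)}
  one_mem' := s.refl'
  mul_mem' hg hh x := s.trans' (hh x) (hg _)
  inv_mem' {g} hg x := by simpa using s.symm' (hg (g⁻¹ x))

lemma orbitRel_le_iff {H : Subgroup (Perm I)} {s : Setoid I} :
    MulAction.orbitRel H I ≤ s ↔ H ≤ classPreserving s := by
  constructor
  · exact fun h g hg x => s.symm' (h ⟨⟨g, hg⟩, rfl⟩)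
  · rintro h _ y ⟨g, rfl⟩
    exact s.symm' (h g.2 y)

lemma setoid_sameCycle_eq_orbitRel (σ : Perm I) :
    SameCycle.setoid σ = MulAction.orbitRel (Subgroup.zpowers σ) I := by
  ext x y
  refine (sameCycle_comm (f := σ)).trans ⟨?_, ?_⟩
  · rintro ⟨k, hk⟩
    exact ⟨⟨σ ^ k, k, rfl⟩, hk⟩
  · rintro ⟨⟨_, k, rfl⟩, hk⟩
    exact ⟨k, hk⟩

lemma setoid_sameCycle_le_iff {σ : Perm I} {s : Setoid I} :
    SameCycle.setoid σ ≤ s ↔ σ ∈ classPreserving s := by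
  rw [setoid_sameCycle_eq_orbitRel, orbitRel_le_iff, Subgroup.zpowers_le]

lemma mem_classPreserving_setoid_sameCycle (σ : Perm I) :
    σ ∈ classPreserving (SameCycle.setoid σ) :=
  setoid_sameCycle_le_iff.mp le_rfl

lemma orbitRel_closure_pair (π ρ : Perm I) :
    MulAction.orbitRel (Subgroup.closure {π, ρ}) I = SameCycle.setoid π ⊔ SameCycle.setoid ρ :=
  eq_of_forall_ge_iff fun s => by
    rw [orbitRel_le_iff, Subgroup.closure_le, Set.pair_subset_iff, sup_le_iff,
      setoid_sameCycle_le_iff, setoid_sameCycle_le_iff]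
    rfl

lemma sameCycle_iff_mem_orbit_closure_pair {π ρ σ : Perm I}
    (h : SameCycle.setoid σ = SameCycle.setoid π ⊔ SameCycle.setoid ρ) (x y : I) :
    σ.SameCycle x y ↔ y ∈ MulAction.orbit (Subgroup.closure {π, ρ}) x := by
  rw [← orbitRel_closure_pair] at h
  exact sameCycle_comm.trans (Setoid.ext_iff.mp h y x)

lemma setoid_sameCycle_one : SameCycle.setoid (1 : Perm I) = ⊥ := by
  ext
  exact sameCycle_one

lemma setoid_sameCycle_inv (σ : Perm I) : SameCycle.setoid σ⁻¹ = SameCycle.setoid σ := by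
  ext
  exact sameCycle_inv

lemma setoid_sameCycle_mul_le (σ τ : Perm I) :
    SameCycle.setoid (σ * τ) ≤ SameCycle.setoid σ ⊔ SameCycle.setoid τ :=
  setoid_sameCycle_le_iff.mpr <| mul_mem
    (setoid_sameCycle_le_iff.mp le_sup_left) (setoid_sameCycle_le_iff.mp le_sup_right)

lemma setoid_sameCycle_mul_inv_le (σ τ : Perm I) :
    SameCycle.setoid (σ * τ⁻¹) ≤ SameCycle.setoid σ ⊔ SameCycle.setoid τ := by
  simpa only [setoid_sameCycle_inv] using setoid_sameCycle_mul_le σ τ⁻¹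

variable [DecidableEq I]

lemma setoid_sameCycle_swap_le_iff {a b : I} {s : Setoid I} :
    SameCycle.setoid (swap a b) ≤ s ↔ s a b := by
  rw [setoid_sameCycle_le_iff]
  constructor
  · intro h
    simpa using h a
  · intro h x
    rcases eq_or_ne x a with rfl | ha
    · rwa [swap_apply_left]
    rcases eq_or_ne x b with rfl | hb
    · rw [swap_apply_right]
      exact s.symm' h
    · rw [swap_apply_of_ne_of_ne ha hb]

lemma setoid_sameCycle_swap_mul_le {s : Setoid I} {σ : Perm I} {a b : I}
    (hσ : SameCycle.setoid σ ≤ s) (hab : s a b) : SameCycle.setoid (swap a b * σ) ≤ s :=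
  (setoid_sameCycle_mul_le _ _).trans (sup_le (setoid_sameCycle_swap_le_iff.mpr hab) hσ)

lemma sameCycle_swap_mul_pow_apply {σ : Perm I} {a b : I} (h : ¬ σ.SameCycle a b) (n : ℕ) :
    (swap a b * σ).SameCycle a ((σ ^ n) a) := by
  induction n with
  | zero => exact SameCycle.rfl
  | succ n ih =>
    by_cases ha : (σ ^ (n + 1)) a = a
    · rw [ha]
    have hb : (σ ^ (n + 1)) a ≠ b := fun hb => h ⟨(n + 1 : ℕ), by rwa [zpow_natCast]⟩
    have hstep : (swap a b * σ) ((σ ^ n) a) = (σ ^ (n + 1)) a := by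
      rw [Perm.mul_apply, ← Perm.mul_apply σ, ← pow_succ', swap_apply_of_ne_of_ne ha hb]
    rw [← hstep]
    exact sameCycle_apply_right.mpr ih

-- The `σ`-cycle of `a` survives up to `σ⁻¹ a`, which `swap a b * σ` sends to `b`.
lemma sameCycle_swap_mul_of_not_sameCycle [Finite I] {σ : Perm I} {a b : I}
    (h : ¬ σ.SameCycle a b) : (swap a b * σ).SameCycle a b := by
  obtain ⟨n, -, hn⟩ := (sameCycle_symm_apply_right.mpr (SameCycle.refl σ a)).exists_pow_eq'
  have hlast : (swap a b * σ).SameCycle a (σ⁻¹ a) := hn ▸ sameCycle_swap_mul_pow_apply h n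
  simpa using sameCycle_apply_right.mpr hlast

lemma setoid_sameCycle_swap_mul [Finite I] {σ : Perm I} {a b : I} (h : ¬ σ.SameCycle a b) :
    SameCycle.setoid (swap a b * σ) = SameCycle.setoid σ ⊔ SameCycle.setoid (swap a b) := by
  have hab := sameCycle_swap_mul_of_not_sameCycle h
  refine le_antisymm ((setoid_sameCycle_mul_le _ _).trans_eq (sup_comm _ _)) (sup_le ?_ ?_)
  · simpa only [swap_mul_self_mul] using
      setoid_sameCycle_swap_mul_le (le_refl (SameCycle.setoid (swap a b * σ))) hab
  · exact setoid_sameCycle_swap_le_iff.mpr hab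

lemma setoid_sameCycle_swap_mul_sup [Finite I] {π : Perm I} {a b : I} (h : ¬ π.SameCycle a b)
    (ρ : Perm I) :
    SameCycle.setoid (swap a b * π) ⊔ SameCycle.setoid ρ =
      SameCycle.setoid π ⊔ SameCycle.setoid ρ ⊔ SameCycle.setoid (swap a b) := by
  rw [setoid_sameCycle_swap_mul h, sup_right_comm]

variable [Fintype I]

-- The functions constant on the cycles of `swap a b` are the solutions of `f a = f b`.
lemma setoidRank_sameCycle_swap_le_one (a b : I) :
    setoidRank (SameCycle.setoid (swap a b)) ≤ 1 := by
  let φ := (LinearMap.proj a : (I → ℚ) →ₗ[ℚ] ℚ) - LinearMap.proj b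
  have hker : classFunctions (SameCycle.setoid (swap a b)) = LinearMap.ker φ := by
    ext f
    rw [mem_classFunctions, setoid_sameCycle_swap_le_iff, LinearMap.mem_ker]
    exact sub_eq_zero.symm
  have hrank := setoidRank_add_finrank_classFunctions (SameCycle.setoid (swap a b))
  have hdim := φ.finrank_range_add_finrank_ker
  rw [← hker, Module.finrank_fintype_fun_eq_card] at hdim
  have hrange : Module.finrank ℚ (LinearMap.range φ) ≤ 1 :=
    (Submodule.finrank_le _).trans_eq (Module.finrank_self ℚ)
  lia

lemma setoidRank_sameCycle_swap_mul {σ : Perm I} {a b : I} (h : ¬ σ.SameCycle a b) :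
    setoidRank (SameCycle.setoid (swap a b * σ)) = setoidRank (SameCycle.setoid σ) + 1 := by
  rw [setoid_sameCycle_swap_mul h]
  have hlt : SameCycle.setoid σ < SameCycle.setoid σ ⊔ SameCycle.setoid (swap a b) :=
    left_lt_sup.mpr fun hle => h (setoid_sameCycle_swap_le_iff.mp hle)
  have hrank := setoidRank_strictMono hlt
  have hsup := setoidRank_sup_le (SameCycle.setoid σ) (SameCycle.setoid (swap a b))
  have hswap := setoidRank_sameCycle_swap_le_one a b
  lia

end CyclePartition

section CayleyDist

lemma cycleCount_eq_card_quotient (σ : Perm I) :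
    cycleCount σ = Nat.card (Quotient (SameCycle.setoid σ)) := by
  rw [setoid_sameCycle_eq_orbitRel]
  rfl

lemma jointOrbitCount_eq_card_quotient (π ρ : Perm I) :
    jointOrbitCount π ρ = Nat.card (Quotient (SameCycle.setoid π ⊔ SameCycle.setoid ρ)) := by
  rw [← orbitRel_closure_pair]
  rfl

variable [Fintype I]

lemma cayleyDist_eq_setoidRank (π ρ : Perm I) :
    cayleyDist π ρ = setoidRank (SameCycle.setoid (ρ * π⁻¹)) := by
  rw [cayleyDist, cycleCount_eq_card_quotient, setoidRank]

lemma cayleyDist_one_left (σ : Perm I) : cayleyDist 1 σ = setoidRank (SameCycle.setoid σ) := by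
  rw [cayleyDist_eq_setoidRank, inv_one, mul_one]

lemma cayleyDist_self (σ : Perm I) : cayleyDist σ σ = 0 := by
  rw [cayleyDist_eq_setoidRank, mul_inv_cancel, setoid_sameCycle_one, setoidRank_bot]

lemma cayleyDist_comm (π ρ : Perm I) : cayleyDist π ρ = cayleyDist ρ π := by
  rw [cayleyDist_eq_setoidRank, cayleyDist_eq_setoidRank, ← setoid_sameCycle_inv, mul_inv_rev,
    inv_inv]

lemma cayleyDist_triangle (π σ τ : Perm I) :
    cayleyDist π τ ≤ cayleyDist π σ + cayleyDist σ τ := by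
  have hmul : τ * σ⁻¹ * (σ * π⁻¹) = τ * π⁻¹ := by group
  simp only [cayleyDist_eq_setoidRank]
  calc setoidRank (SameCycle.setoid (τ * π⁻¹))
      ≤ setoidRank (SameCycle.setoid (τ * σ⁻¹) ⊔ SameCycle.setoid (σ * π⁻¹)) :=
        setoidRank_strictMono.monotone (hmul ▸ setoid_sameCycle_mul_le _ _)
    _ ≤ setoidRank (SameCycle.setoid (σ * π⁻¹)) + setoidRank (SameCycle.setoid (τ * σ⁻¹)) :=
        (setoidRank_sup_le _ _).trans_eq (add_comm _ _)

variable [DecidableEq I]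

lemma cayleyDist_swap_mul_self_le_one (a b : I) (π : Perm I) :
    cayleyDist π (swap a b * π) ≤ 1 := by
  rw [cayleyDist_eq_setoidRank, mul_inv_cancel_right]
  exact setoidRank_sameCycle_swap_le_one a b

lemma cayleyDist_swap_mul_of_not_sameCycle {π ρ : Perm I} {a b : I}
    (h : ¬ (π * ρ⁻¹).SameCycle a b) : cayleyDist (swap a b * π) ρ = cayleyDist π ρ + 1 := by
  rw [cayleyDist_comm, cayleyDist_comm π, cayleyDist_eq_setoidRank, cayleyDist_eq_setoidRank,
    mul_assoc, setoidRank_sameCycle_swap_mul h]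

-- The permutation `swap a (κ a) * κ` fixes `a`, so multiplying it by `swap a (κ a)` joins cycles.
lemma cayleyDist_swap_mul_apply {π ρ : Perm I} {a : I} (ha : (π * ρ⁻¹) a ≠ a) :
    cayleyDist (swap a ((π * ρ⁻¹) a) * π) ρ + 1 = cayleyDist π ρ := by
  set κ := π * ρ⁻¹ with hκ
  have hfix : Function.IsFixedPt (swap a (κ a) * κ) a := swap_apply_right a (κ a)
  have hnot : ¬ (swap a (κ a) * π * ρ⁻¹).SameCycle a (κ a) := by
    rw [mul_assoc, ← hκ]
    exact fun h => ha (h.eq_of_left hfix).symm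
  rw [← cayleyDist_swap_mul_of_not_sameCycle hnot, swap_mul_self_mul]

end CayleyDist

section CycleJoin

/-- The covering relation of the noncrossing order: `ρ` is obtained from `π` by multiplication with
a transposition that joins two distinct cycles of `π`. -/
def CycleJoin [DecidableEq I] (π ρ : Perm I) : Prop :=
  ∃ a b, ¬ π.SameCycle a b ∧ ρ = swap a b * π

variable [Fintype I] [DecidableEq I] {π π' ρ σ : Perm I}

lemma CycleJoin.cayleyDist_one_left (h : CycleJoin π π') :
    cayleyDist 1 π' = cayleyDist 1 π + 1 := by
  obtain ⟨a, b, hab, rfl⟩ := h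
  rw [cayleyDist_comm, cayleyDist_comm 1,
    cayleyDist_swap_mul_of_not_sameCycle (by rwa [inv_one, mul_one])]

lemma CycleJoin.cayleyDist_le_add_one (h : CycleJoin π π') (ρ : Perm I) :
    cayleyDist π ρ ≤ cayleyDist π' ρ + 1 := by
  obtain ⟨a, b, -, rfl⟩ := h
  have htriangle := cayleyDist_triangle π (swap a b * π) ρ
  have hstep := cayleyDist_swap_mul_self_le_one a b π
  lia

lemma cycleJoin_swap_mul_of_cayleyDist_lt {a b : I}
    (h : cayleyDist 1 π < cayleyDist 1 (swap a b * π)) : CycleJoin π (swap a b * π) := by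
  refine ⟨a, b, fun hab => h.not_ge ?_, rfl⟩
  rw [cayleyDist_one_left, cayleyDist_one_left]
  exact setoidRank_strictMono.monotone (setoid_sameCycle_swap_mul_le le_rfl hab)

lemma NCLe.of_cycleJoin (h : CycleJoin π π') (h' : NCLe π' σ) : NCLe π σ := by
  have hlength := h.cayleyDist_one_left
  have hdist := h.cayleyDist_le_add_one σ
  have htriangle := cayleyDist_triangle 1 π σ
  rw [NCLe] at h' ⊢
  lia

lemma NCLe.exists_cycleJoin (h : NCLe π σ) (hne : π ≠ σ) :
    ∃ π', CycleJoin π π' ∧ NCLe π' σ ∧ cayleyDist π' σ < cayleyDist π σ := by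
  obtain ⟨a, ha⟩ : ∃ a, (π * σ⁻¹) a ≠ a := by
    by_contra! hfix
    exact hne (mul_inv_eq_one.mp (Perm.ext hfix))
  have hcloser := cayleyDist_swap_mul_apply ha
  set π' := swap a ((π * σ⁻¹) a) * π
  have hlower := cayleyDist_triangle 1 π' σ
  have hupper := cayleyDist_triangle 1 π π'
  have hstep : cayleyDist π π' ≤ 1 := cayleyDist_swap_mul_self_le_one _ _ _
  rw [NCLe] at h
  refine ⟨π', cycleJoin_swap_mul_of_cayleyDist_lt ?_, ?_, ?_⟩
  · lia
  · rw [NCLe]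
    lia
  · lia

theorem ncLe_iff_reflTransGen_cycleJoin : NCLe π σ ↔ ReflTransGen CycleJoin π σ := by
  constructor
  · intro h
    induction hd : cayleyDist π σ using Nat.strong_induction_on generalizing π with
    | _ d ih =>
      by_cases hne : π = σ
      · rw [hne]
      · obtain ⟨π', hjoin, hle, hlt⟩ := h.exists_cycleJoin hne
        exact .head hjoin (ih _ (hd ▸ hlt) hle rfl)
  · intro h
    induction h using ReflTransGen.head_induction_on with
    | refl => rw [NCLe, cayleyDist_self, add_zero]
    | head hjoin _ ih => exact NCLe.of_cycleJoin hjoin ih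

end CycleJoin

section Genus

variable [Fintype I]

/-- Twice the total genus of the hypermap with permutations `π` and `ρ⁻¹`, by Euler's formula
summed over the blocks of `Π(π) ∨ Π(ρ)`; `π` is planar on `ρ⁻¹` when it vanishes. -/
noncomputable def doubleGenus (π ρ : Perm I) : ℤ :=
  cayleyDist 1 π + cayleyDist 1 ρ + cayleyDist π ρ -
    2 * setoidRank (SameCycle.setoid π ⊔ SameCycle.setoid ρ)

variable {π π' ρ σ : Perm I}

lemma doubleGenus_eq_zero_iff (π ρ : Perm I) :
    doubleGenus π ρ = 0 ↔ cycleCount π + cycleCount ρ + cycleCount (ρ * π⁻¹) =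
      Fintype.card I + 2 * jointOrbitCount π ρ := by
  simp only [doubleGenus, cayleyDist_one_left, cayleyDist_eq_setoidRank π,
    cycleCount_eq_card_quotient, jointOrbitCount_eq_card_quotient]
  have hπ := setoidRank_add_card_quotient (SameCycle.setoid π)
  have hρ := setoidRank_add_card_quotient (SameCycle.setoid ρ)
  have hκ := setoidRank_add_card_quotient (SameCycle.setoid (ρ * π⁻¹))
  have hsup := setoidRank_add_card_quotient (SameCycle.setoid π ⊔ SameCycle.setoid ρ)
  lia

lemma doubleGenus_comm (π ρ : Perm I) : doubleGenus π ρ = doubleGenus ρ π := by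
  rw [doubleGenus, doubleGenus, cayleyDist_comm π, sup_comm, add_comm (cayleyDist 1 π : ℤ)]

lemma doubleGenus_of_setoid_sameCycle_le
    (h : SameCycle.setoid ρ ≤ SameCycle.setoid σ) :
    doubleGenus σ ρ = cayleyDist 1 ρ + cayleyDist ρ σ - cayleyDist 1 σ := by
  rw [doubleGenus, sup_eq_left.mpr h, ← cayleyDist_one_left, cayleyDist_comm σ]
  ring

lemma doubleGenus_self (σ : Perm I) : doubleGenus σ σ = 0 := by
  rw [doubleGenus_of_setoid_sameCycle_le le_rfl, cayleyDist_self]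
  ring

lemma doubleGenus_one_left (ρ : Perm I) : doubleGenus 1 ρ = 0 := by
  rw [doubleGenus_comm, doubleGenus_of_setoid_sameCycle_le, cayleyDist_self]
  · ring
  · exact setoid_sameCycle_one.trans_le bot_le

lemma CycleJoin.doubleGenus_le [DecidableEq I] (h : CycleJoin π π') (ρ : Perm I) :
    doubleGenus π ρ ≤ doubleGenus π' ρ := by
  have hlength := h.cayleyDist_one_left
  have hdist := h.cayleyDist_le_add_one ρ
  obtain ⟨a, b, hab, rfl⟩ := h
  rw [doubleGenus, doubleGenus, setoid_sameCycle_swap_mul_sup hab ρ]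
  by_cases hsup : (SameCycle.setoid π ⊔ SameCycle.setoid ρ) a b
  · rw [sup_eq_left.mpr (setoid_sameCycle_swap_le_iff.mpr hsup)]
    lia
  · have hdist' : cayleyDist (swap a b * π) ρ = cayleyDist π ρ + 1 :=
      cayleyDist_swap_mul_of_not_sameCycle fun h => hsup (setoid_sameCycle_mul_inv_le π ρ h)
    have hrank := setoidRank_sup_le (SameCycle.setoid π ⊔ SameCycle.setoid ρ)
      (SameCycle.setoid (swap a b))
    have hswap := setoidRank_sameCycle_swap_le_one a b
    lia

lemma NCLe.doubleGenus_le (h : NCLe π σ) (ρ : Perm I) : doubleGenus π ρ ≤ doubleGenus σ ρ := by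
  classical
  rw [ncLe_iff_reflTransGen_cycleJoin] at h
  induction h using ReflTransGen.head_induction_on with
  | refl => rfl
  | head hjoin _ ih => exact (hjoin.doubleGenus_le ρ).trans ih

theorem doubleGenus_eq_zero_of_ncLe (hπ : NCLe π σ) (hρ : NCLe ρ σ) : doubleGenus π ρ = 0 := by
  apply le_antisymm
  · calc doubleGenus π ρ ≤ doubleGenus σ ρ := hπ.doubleGenus_le ρ
      _ = doubleGenus ρ σ := doubleGenus_comm σ ρ
      _ ≤ doubleGenus σ σ := hρ.doubleGenus_le σ
      _ = 0 := doubleGenus_self σ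
  · have hone : NCLe 1 π := by rw [NCLe, cayleyDist_self, zero_add]
    calc 0 = doubleGenus 1 ρ := (doubleGenus_one_left ρ).symm
      _ ≤ doubleGenus π ρ := hone.doubleGenus_le ρ

lemma exists_cycleJoin_doubleGenus_eq [DecidableEq I]
    (h : ¬ SameCycle.setoid ρ ≤ SameCycle.setoid π) :
    ∃ π', CycleJoin π π' ∧ cayleyDist π' ρ < cayleyDist π ρ ∧
      SameCycle.setoid π' ⊔ SameCycle.setoid ρ = SameCycle.setoid π ⊔ SameCycle.setoid ρ ∧
      doubleGenus π' ρ = doubleGenus π ρ := by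
  obtain ⟨a, ha⟩ : ∃ a, ¬ π.SameCycle a ((π * ρ⁻¹) a) := by
    have hρ : ρ⁻¹ ∉ classPreserving (SameCycle.setoid π) := by
      rwa [inv_mem_iff, ← setoid_sameCycle_le_iff]
    rw [← Subgroup.mul_mem_cancel_left _ (mem_classPreserving_setoid_sameCycle π)] at hρ
    exact not_forall.mp hρ
  have hcloser := cayleyDist_swap_mul_apply fun hfix => ha (hfix.symm ▸ SameCycle.rfl)
  have hjoin : CycleJoin π (swap a ((π * ρ⁻¹) a) * π) := ⟨a, _, ha, rfl⟩
  have hmem : (SameCycle.setoid π ⊔ SameCycle.setoid ρ) a ((π * ρ⁻¹) a) :=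
    setoid_sameCycle_le_iff.mp (setoid_sameCycle_mul_inv_le π ρ) a
  have hsup := (setoid_sameCycle_swap_mul_sup ha ρ).trans
    (sup_eq_left.mpr (setoid_sameCycle_swap_le_iff.mpr hmem))
  refine ⟨_, hjoin, by lia, hsup, ?_⟩
  have hlength := hjoin.cayleyDist_one_left
  rw [doubleGenus, doubleGenus, hsup]
  lia

lemma exists_reflTransGen_cycleJoin_setoid_eq_sup [DecidableEq I] (π ρ : Perm I) :
    ∃ σ, ReflTransGen CycleJoin π σ ∧
      SameCycle.setoid σ = SameCycle.setoid π ⊔ SameCycle.setoid ρ ∧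
      doubleGenus σ ρ = doubleGenus π ρ := by
  induction hd : cayleyDist π ρ using Nat.strong_induction_on generalizing π with
  | _ d ih =>
    by_cases hle : SameCycle.setoid ρ ≤ SameCycle.setoid π
    · exact ⟨π, .refl, (sup_eq_left.mpr hle).symm, rfl⟩
    · obtain ⟨π', hjoin, hlt, hsup, hgenus⟩ := exists_cycleJoin_doubleGenus_eq hle
      obtain ⟨σ, hchain, hσsup, hσgenus⟩ := ih _ (hd ▸ hlt) π' rfl
      exact ⟨σ, .head hjoin hchain, hσsup.trans hsup, hσgenus.trans hgenus⟩

theorem exists_ncLe_setoid_eq_sup_of_doubleGenus_eq_zero (h : doubleGenus π ρ = 0) :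
    ∃ σ, NCLe π σ ∧ NCLe ρ σ ∧
      SameCycle.setoid σ = SameCycle.setoid π ⊔ SameCycle.setoid ρ := by
  classical
  obtain ⟨σ, hchain, hsup, hgenus⟩ := exists_reflTransGen_cycleJoin_setoid_eq_sup π ρ
  refine ⟨σ, ncLe_iff_reflTransGen_cycleJoin.mpr hchain, ?_, hsup⟩
  rw [h, doubleGenus_of_setoid_sameCycle_le (le_sup_right.trans_eq hsup.symm)] at hgenus
  rw [NCLe]
  lia

lemma cayleyDist_add_cayleyDist_eq_of_setoid_eq_sup (hπ : NCLe π σ) (hρ : NCLe ρ σ)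
    (hsup : SameCycle.setoid σ = SameCycle.setoid π ⊔ SameCycle.setoid ρ) :
    cayleyDist π σ + cayleyDist σ ρ = cayleyDist π ρ := by
  have hgenus := doubleGenus_eq_zero_of_ncLe hπ hρ
  rw [doubleGenus, ← hsup, ← cayleyDist_one_left] at hgenus
  rw [NCLe] at hπ hρ
  rw [cayleyDist_comm σ]
  lia

end Genus

end

theorem stmt10 {I : Type*} [Fintype I] (π ρ : Equiv.Perm I) :
    List.TFAE
      [ -- (1) π and ρ have a common upper bound:
        ∃ σ, NCLe π σ ∧ NCLe ρ σ,
        -- (2) a common upper bound σ with Π(σ) = Π(π) ∨ Π(ρ):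
        ∃ σ, NCLe π σ ∧ NCLe ρ σ ∧
          ∀ x y : I, σ.SameCycle x y ↔
            y ∈ MulAction.orbit (Subgroup.closure {π, ρ} : Subgroup (Equiv.Perm I)) x,
        -- (3) a common upper bound lying on a geodesic between π and ρ:
        ∃ σ, NCLe π σ ∧ NCLe ρ σ ∧
          cayleyDist π σ + cayleyDist σ ρ = cayleyDist π ρ,
        -- (4) π is planar on ρ⁻¹:
        cycleCount π + cycleCount ρ + cycleCount (ρ * π⁻¹) =
          Fintype.card I + 2 * jointOrbitCount π ρ ] := by
  rw [← doubleGenus_eq_zero_iff]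
  tfae_have 2 → 1 := fun ⟨σ, hπ, hρ, _⟩ => ⟨σ, hπ, hρ⟩
  tfae_have 3 → 1 := fun ⟨σ, hπ, hρ, _⟩ => ⟨σ, hπ, hρ⟩
  tfae_have 1 → 4 := fun ⟨_, hπ, hρ⟩ => doubleGenus_eq_zero_of_ncLe hπ hρ
  tfae_have 4 → 2 := fun h =>
    let ⟨σ, hπ, hρ, hsup⟩ := exists_ncLe_setoid_eq_sup_of_doubleGenus_eq_zero h
    ⟨σ, hπ, hρ, sameCycle_iff_mem_orbit_closure_pair hsup⟩
  tfae_have 4 → 3 := fun h =>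
    let ⟨σ, hπ, hρ, hsup⟩ := exists_ncLe_setoid_eq_sup_of_doubleGenus_eq_zero h
    ⟨σ, hπ, hρ, cayleyDist_add_cayleyDist_eq_of_setoid_eq_sup hπ hρ hsup⟩
  tfae_finish
end

section
/- Let ξ₁, …, ξₙ be jointly centered Gaussian real random variables. Then E[ξ₁⋯ξₙ] = Σ_{π ∈ P₂(n)} Π_{{k,l} ∈ π} E[ξ_k ξ_l], where the sum is over all pairings of [n] (so the expectation vanishes when n is odd). (Wick/Isserlis formula.) -/
open MeasureTheory ProbabilityTheory
open scoped Classical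

/-!
The formula rests on Gaussian integration by parts: if `(U, Y)` is jointly Gaussian and
`c = Cov(U, Y)`, then `E[(U - E U) F(Y)] = E[DF(Y) c]`. To see this, choose `b` with `Var(U) b = c`;
then `Z = Y - U b` is uncorrelated with `U`, hence independent of it, and conditionally on `Z` the
identity is the one-dimensional one, which is integration by parts against the Gaussian density.
Taking `F` to be a product of coordinates expands `E[ξ_i ∏_{j ∈ t} ξ_j]` as
`∑_{j ∈ t} Cov(ξ_i, ξ_j) E[∏_{k ∈ t \ {j}} ξ_k]`. The sum over pairings satisfies the same
recursion: classify the pairings of `s` by the partner of the smallest element of `s`.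
-/

section OneDimensional

lemma hasDerivAt_gaussianPDFReal (m : ℝ) (v : NNReal) (x : ℝ) :
    HasDerivAt (gaussianPDFReal m v) (-((x - m) / v) * gaussianPDFReal m v x) x := by
  have h_exponent : HasDerivAt (fun x : ℝ ↦ -(x - m) ^ 2 / (2 * v)) (-((x - m) / v)) x := by
    refine (((((hasDerivAt_id x).sub_const m).pow 2).neg).div_const (2 * (v : ℝ))).congr_deriv ?_
    simp [neg_div, mul_div_mul_left]
  rw [gaussianPDFReal_def]
  exact (h_exponent.exp.const_mul _).congr_deriv (by ring)

variable {m : ℝ} {v : NNReal}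

lemma integrable_gaussianReal_iff {E : Type*} [NormedAddCommGroup E] [NormedSpace ℝ E]
    (hv : v ≠ 0) {f : ℝ → E} :
    Integrable f (gaussianReal m v) ↔ Integrable fun x ↦ gaussianPDFReal m v x • f x := by
  rw [gaussianReal_of_var_ne_zero _ hv, integrable_withDensity_iff_integrable_smul'
    (measurable_gaussianPDF m v) (ae_of_all _ fun _ ↦ gaussianPDF_lt_top)]
  simp only [toReal_gaussianPDF]

theorem integral_sub_mul_gaussianReal {f f' : ℝ → ℝ} (hf : ∀ x, HasDerivAt f (f' x) x)
    (h_int : Integrable f (gaussianReal m v))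
    (h_int_mul : Integrable (fun x ↦ (x - m) * f x) (gaussianReal m v))
    (h_int_deriv : Integrable f' (gaussianReal m v)) :
    ∫ x, (x - m) * f x ∂gaussianReal m v = v * ∫ x, f' x ∂gaussianReal m v := by
  rcases eq_or_ne v 0 with rfl | hv
  · simp
  have hv' : (v : ℝ) ≠ 0 := by exact_mod_cast hv
  have h_pdf (x : ℝ) : gaussianPDFReal m v x • ((x - m) * f x) =
      -v * (f x * (-((x - m) / v) * gaussianPDFReal m v x)) := by
    rw [smul_eq_mul]
    field_simp
  rw [integrable_gaussianReal_iff hv] at h_int h_int_mul h_int_deriv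
  have h_parts := integral_mul_deriv_eq_deriv_mul_of_integrable
    (fun x _ ↦ hf x) (fun x _ ↦ hasDerivAt_gaussianPDFReal m v x)
    ((h_int_mul.const_mul (-(v : ℝ)⁻¹)).congr (ae_of_all _ fun x ↦ by
      simp only [h_pdf, Pi.mul_apply]; field_simp))
    (h_int_deriv.congr (ae_of_all _ fun x ↦ mul_comm _ _))
    (h_int.congr (ae_of_all _ fun x ↦ mul_comm _ _))
  simp_rw [integral_gaussianReal_eq_integral_smul hv, h_pdf, integral_const_mul, h_parts,
    smul_eq_mul, mul_comm (f' _)]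
  ring

lemma integral_prod_sub_mul_gaussianReal {α : Type*} [MeasurableSpace α] {ν : Measure α}
    [SFinite ν] {f f' : ℝ × α → ℝ}
    (hf : ∀ z x, HasDerivAt (fun x ↦ f (x, z)) (f' (x, z)) x)
    (h_int : Integrable f ((gaussianReal m v).prod ν))
    (h_int_mul : Integrable (fun p ↦ (p.1 - m) * f p) ((gaussianReal m v).prod ν))
    (h_int_deriv : Integrable f' ((gaussianReal m v).prod ν)) :
    ∫ p, (p.1 - m) * f p ∂(gaussianReal m v).prod ν =
      v * ∫ p, f' p ∂(gaussianReal m v).prod ν := by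
  rw [integral_prod_symm _ h_int_mul, integral_prod_symm _ h_int_deriv, ← integral_const_mul]
  refine integral_congr_ae ?_
  filter_upwards [h_int.prod_left_ae, h_int_mul.prod_left_ae, h_int_deriv.prod_left_ae]
    with z hz hz_mul hz_deriv
  exact integral_sub_mul_gaussianReal (hf z) hz hz_mul hz_deriv

end OneDimensional

section IntegrationByParts

variable {Ω : Type*} [MeasurableSpace Ω] {P : Measure Ω}
  {E : Type*} [NormedAddCommGroup E] [NormedSpace ℝ E] {U : Ω → ℝ} {Y : Ω → E} {b c : E}

lemma variance_smul_inv_smul [IsProbabilityMeasure P] (hU : MemLp U 2 P)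
    (hc : ∀ L : StrongDual ℝ E, cov[U, L ∘ Y; P] = L c) :
    Var[U; P] • Var[U; P]⁻¹ • c = c := by
  -- If the variance vanishes then so does its junk inverse, but also `c`, as `U` is constant a.s.
  rcases eq_or_ne Var[U; P] 0 with hV | hV
  · have hU_const : U =ᵐ[P] fun _ ↦ P[U] := ae_eq_integral_of_variance_eq_zero hU hV
    have hc_zero : c = 0 := SeparatingDual.eq_zero_of_forall_dual_eq_zero (R := ℝ) fun L ↦ by
      rw [← hc, covariance]
      refine integral_eq_zero_of_ae ?_
      filter_upwards [hU_const] with ω hω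
      simp [hω]
    simp [hc_zero]
  · exact smul_inv_smul₀ hV c

variable [MeasurableSpace E] [BorelSpace E] [CompleteSpace E] [SecondCountableTopology E]

lemma indepFun_sub_smul_of_hasGaussianLaw (hUY : HasGaussianLaw (fun ω ↦ (U ω, Y ω)) P)
    (hb : ∀ L : StrongDual ℝ E, cov[U, L ∘ Y; P] = L (Var[U; P] • b)) :
    IndepFun U (fun ω ↦ Y ω - U ω • b) P := by
  have := hUY.isProbabilityMeasure
  have hU : MemLp U 2 P := hUY.fst.memLp_two
  refine HasGaussianLaw.indepFun_of_covariance_strongDual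
    (hUY.map_fun ((ContinuousLinearMap.fst ℝ ℝ E).prod
      (.snd ℝ ℝ E - (ContinuousLinearMap.fst ℝ ℝ E).smulRight b))) fun L₁ L₂ ↦ ?_
  have hLY : MemLp (L₂ ∘ Y) 2 P := (hUY.snd.map L₂).memLp_two
  have h_left : L₁ ∘ U = fun ω ↦ L₁ 1 * U ω := by
    ext ω; simpa [mul_comm] using L₁.map_smul (U ω) 1
  have h_right : L₂ ∘ (fun ω ↦ Y ω - U ω • b) = L₂ ∘ Y - L₂ b • U := by
    ext ω; simp [mul_comm]
  rw [h_left, h_right, covariance_const_mul_left,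
    covariance_sub_right hU hLY (hU.const_smul _), covariance_smul_right,
    covariance_self hU.aemeasurable, hb]
  simp [mul_comm]

lemma hasLaw_prodMk_sub_smul_of_hasGaussianLaw (hUY : HasGaussianLaw (fun ω ↦ (U ω, Y ω)) P)
    (hb : ∀ L : StrongDual ℝ E, cov[U, L ∘ Y; P] = L (Var[U; P] • b)) :
    HasLaw (fun ω ↦ (U ω, Y ω - U ω • b))
      ((gaussianReal P[U] Var[U; P].toNNReal).prod (P.map fun ω ↦ Y ω - U ω • b)) P := by
  have := hUY.isProbabilityMeasure
  have hU : AEMeasurable U P := hUY.fst.aemeasurable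
  have hZ : AEMeasurable (fun ω ↦ Y ω - U ω • b) P := hUY.snd.aemeasurable.sub (hU.smul_const b)
  refine ⟨hU.prodMk hZ, ?_⟩
  rw [(indepFun_iff_map_prod_eq_prod_map_map hU hZ).1
    (indepFun_sub_smul_of_hasGaussianLaw hUY hb), hUY.fst.map_eq_gaussianReal]

lemma integral_sub_mul_comp_eq_variance_mul {F : E → ℝ}
    (hUY : HasGaussianLaw (fun ω ↦ (U ω, Y ω)) P)
    (hb : ∀ L : StrongDual ℝ E, cov[U, L ∘ Y; P] = L (Var[U; P] • b)) (hF : Differentiable ℝ F)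
    (h_int : Integrable (fun ω ↦ F (Y ω)) P)
    (h_int_mul : Integrable (fun ω ↦ (U ω - P[U]) * F (Y ω)) P)
    (h_int_deriv : Integrable (fun ω ↦ fderiv ℝ F (Y ω) b) P) :
    ∫ ω, (U ω - P[U]) * F (Y ω) ∂P = Var[U; P] * ∫ ω, fderiv ℝ F (Y ω) b ∂P := by
  have := hUY.isProbabilityMeasure
  have h_law := hasLaw_prodMk_sub_smul_of_hasGaussianLaw hUY hb
  have hF_meas : Measurable F := hF.continuous.measurable
  have h_meas : Measurable fun p : ℝ × E ↦ F (p.1 • b + p.2) := by fun_prop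
  have h_meas_mul : Measurable fun p : ℝ × E ↦ (p.1 - P[U]) * F (p.1 • b + p.2) := by fun_prop
  have h_meas_deriv : Measurable fun p : ℝ × E ↦ fderiv ℝ F (p.1 • b + p.2) b :=
    (measurable_fderiv_apply_const ℝ F b).comp (by fun_prop)
  have hY (ω : Ω) : U ω • b + (Y ω - U ω • b) = Y ω := add_sub_cancel _ _
  have h_deriv (z : E) (x : ℝ) :
      HasDerivAt (fun x : ℝ ↦ F (x • b + z)) (fderiv ℝ F (x • b + z) b) x := by
    have h_line : HasDerivAt (fun x : ℝ ↦ x • b + z) b x := by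
      simpa using ((hasDerivAt_id x).smul_const b).add_const z
    exact (hF _).hasFDerivAt.comp_hasDerivAt x h_line
  have h_transfer {g : ℝ × E → ℝ} (hg : Measurable g) := h_law.map_eq ▸
    integrable_map_measure (μ := P) hg.aestronglyMeasurable h_law.aemeasurable
  have h_stein := integral_prod_sub_mul_gaussianReal h_deriv
    ((h_transfer h_meas).2 (by simpa only [Function.comp_def, hY]))
    ((h_transfer h_meas_mul).2 (by simpa only [Function.comp_def, hY]))
    ((h_transfer h_meas_deriv).2 (by simpa only [Function.comp_def, hY]))
  rw [← h_law.integral_comp h_meas_mul.aestronglyMeasurable,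
    ← h_law.integral_comp h_meas_deriv.aestronglyMeasurable,
    Real.coe_toNNReal _ (variance_nonneg U P)] at h_stein
  simpa only [Function.comp_def, hY] using h_stein

theorem integral_sub_mul_comp_of_hasGaussianLaw {F : E → ℝ}
    (hUY : HasGaussianLaw (fun ω ↦ (U ω, Y ω)) P)
    (hc : ∀ L : StrongDual ℝ E, cov[U, L ∘ Y; P] = L c) (hF : Differentiable ℝ F)
    (h_int : Integrable (fun ω ↦ F (Y ω)) P)
    (h_int_mul : Integrable (fun ω ↦ (U ω - P[U]) * F (Y ω)) P)
    (h_int_deriv : Integrable (fun ω ↦ fderiv ℝ F (Y ω) c) P) :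
    ∫ ω, (U ω - P[U]) * F (Y ω) ∂P = ∫ ω, fderiv ℝ F (Y ω) c ∂P := by
  have := hUY.isProbabilityMeasure
  have hb := variance_smul_inv_smul hUY.fst.memLp_two hc
  rw [integral_sub_mul_comp_eq_variance_mul hUY (b := Var[U; P]⁻¹ • c) (by rwa [hb]) hF h_int
    h_int_mul (by simpa only [map_smul] using h_int_deriv.fun_smul Var[U; P]⁻¹),
    ← integral_const_mul]
  simp_rw [← smul_eq_mul, ← map_smul, hb]

end IntegrationByParts

section Pairings

open Equiv Equiv.Perm

variable {ι : Type*} [Fintype ι] [DecidableEq ι] {s : Finset ι} {i j : ι} {π : Perm ι}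

/-- The pairings (perfect matchings) of `s`, encoded as the involutions moving exactly the points of
`s`: the permutation `π` stands for the pairing with blocks `{k, π k}`, `k ∈ s`. -/
def pairings (s : Finset ι) : Finset (Perm ι) :=
  {π | π * π = 1 ∧ π.support = s}

lemma mem_pairings : π ∈ pairings s ↔ π * π = 1 ∧ π.support = s := by
  simp [pairings]

lemma pairings_empty : pairings (∅ : Finset ι) = {1} := by
  ext π
  rw [mem_pairings, support_eq_empty_iff, Finset.mem_singleton]
  exact ⟨And.right, fun h ↦ ⟨by rw [h, one_mul], h⟩⟩

lemma pairings_univ :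
    pairings Finset.univ = ({π | π * π = 1 ∧ ∀ k, π k ≠ k} : Finset (Perm ι)) := by
  ext π
  simp [mem_pairings, Finset.ext_iff]

lemma apply_mem_erase_of_mem_pairings (hπ : π ∈ pairings s) (hi : i ∈ s) : π i ∈ s.erase i := by
  obtain ⟨-, rfl⟩ := mem_pairings.1 hπ
  exact Finset.mem_erase.2 ⟨mem_support.1 hi, apply_mem_support.2 hi⟩

lemma disjoint_swap_of_mem_pairings_erase (hπ : π ∈ pairings ((s.erase i).erase j)) :
    Disjoint (swap i j) π := by
  obtain ⟨-, hs⟩ := mem_pairings.1 hπ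
  refine disjoint_iff_disjoint_support.2 (Finset.disjoint_left.2 fun k hk ↦ ?_)
  rw [mem_support, swap_apply_ne_self_iff] at hk
  grind

lemma swap_mul_mem_pairings (hi : i ∈ s) (hj : j ∈ s.erase i)
    (hπ : π ∈ pairings ((s.erase i).erase j)) : swap i j * π ∈ pairings s := by
  have h_disj := disjoint_swap_of_mem_pairings_erase hπ
  obtain ⟨h_inv, hs⟩ := mem_pairings.1 hπ
  have hij : i ≠ j := (Finset.ne_of_mem_erase hj).symm
  refine mem_pairings.2 ⟨?_, ?_⟩
  · rw [h_disj.commute.symm.mul_mul_mul_comm, swap_mul_self, h_inv, one_mul]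
  · rw [h_disj.support_mul, hs, support_swap hij]
    grind

lemma swap_mul_mem_pairings_erase (hπ : π ∈ pairings s) (hij : π i = j) :
    swap i j * π ∈ pairings ((s.erase i).erase j) := by
  obtain ⟨h_inv, rfl⟩ := mem_pairings.1 hπ
  have hji : π j = i := by rw [← hij, ← Perm.mul_apply, h_inv, Perm.one_apply]
  have h_comm : Commute (swap i j) π := by
    rw [Commute, SemiconjBy, mul_swap_eq_swap_mul, hij, hji, swap_comm]
  refine mem_pairings.2 ⟨?_, ?_⟩
  · rw [h_comm.symm.mul_mul_mul_comm, swap_mul_self, h_inv, one_mul]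
  · ext k
    simp only [mem_support, Perm.mul_apply, Finset.mem_erase, swap_apply_def]
    grind

end Pairings

section PairingSum

open Equiv Equiv.Perm

variable {ι : Type*} [Fintype ι] [LinearOrder ι] {R : Type*} [CommSemiring R]
  {s : Finset ι} {i j : ι} {π σ : Perm ι}

/-- The product of `C` over the pairs of the pairing encoded by the involution `π`. Each pair
`{k, π k}` contributes once, through its smaller element. -/
def pairingProd (C : ι → ι → R) (π : Perm ι) : R :=
  ∏ k with k < π k, C k (π k)

variable (C : ι → ι → R)

lemma pairingProd_one : pairingProd C 1 = 1 := by
  simp [pairingProd]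

lemma pairingProd_swap (hij : i < j) : pairingProd C (swap i j) = C i j := by
  have h_lt : ({k | k < swap i j k} : Finset ι) = {i} := by
    ext k
    grind
  rw [pairingProd, h_lt, Finset.prod_singleton, swap_apply_left]

lemma pairingProd_mul_of_disjoint (h : Disjoint π σ) :
    pairingProd C (π * σ) = pairingProd C π * pairingProd C σ := by
  simp only [pairingProd, Finset.prod_filter]
  rw [← Finset.prod_mul_distrib]
  refine Finset.prod_congr rfl fun k _ ↦ ?_
  rcases h k with hk | hk
  · simp [h.commute.eq, Perm.mul_apply, hk]
  · simp [Perm.mul_apply, hk]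

/-- The sum over all pairings of `s` of the products of `C` over their pairs: the hafnian of `C`
restricted to `s`, when `C` is symmetric. -/
def pairingSum (C : ι → ι → R) (s : Finset ι) : R :=
  ∑ π ∈ pairings s, pairingProd C π

lemma pairingSum_empty : pairingSum C ∅ = 1 := by
  rw [pairingSum, pairings_empty, Finset.sum_singleton, pairingProd_one]

theorem pairingSum_eq_sum_erase (hi : i ∈ s) (hi_min : ∀ j ∈ s.erase i, i < j) :
    pairingSum C s = ∑ j ∈ s.erase i, C i j * pairingSum C ((s.erase i).erase j) := by
  rw [pairingSum, ← Finset.sum_fiberwise_of_maps_to fun π hπ ↦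
    apply_mem_erase_of_mem_pairings hπ hi]
  refine Finset.sum_congr rfl fun j hj ↦ ?_
  rw [pairingSum, Finset.mul_sum]
  symm
  refine Finset.sum_bij' (fun π _ ↦ swap i j * π) (fun π _ ↦ swap i j * π)
    (fun π hπ ↦ ?_) (fun π hπ ↦ ?_) (fun π _ ↦ ?_) (fun π _ ↦ ?_) (fun π hπ ↦ ?_)
  · have hπi : π i = i := by
      rw [← notMem_support, (mem_pairings.1 hπ).2]
      simp
    refine Finset.mem_filter.2 ⟨swap_mul_mem_pairings hi hj hπ, ?_⟩
    rw [Perm.mul_apply, hπi, swap_apply_left]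
  · obtain ⟨hπ, hπi⟩ := Finset.mem_filter.1 hπ
    exact swap_mul_mem_pairings_erase hπ hπi
  · exact swap_mul_self_mul i j π
  · exact swap_mul_self_mul i j π
  · rw [pairingProd_mul_of_disjoint C (disjoint_swap_of_mem_pairings_erase hπ),
      pairingProd_swap C (hi_min j hj)]

end PairingSum

section Moments

variable {Ω : Type*} [MeasurableSpace Ω] {P : Measure Ω}

lemma memLp_finsetProd_of_forall_memLp [IsFiniteMeasure P] {ι 𝕜 : Type*} [NormedCommRing 𝕜]
    {f : ι → Ω → 𝕜} {s : Finset ι} (hf : ∀ i ∈ s, ∀ q : ENNReal, q ≠ ⊤ → MemLp (f i) q P)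
    {p : ENNReal} (hp : p ≠ ⊤) : MemLp (fun ω ↦ ∏ i ∈ s, f i ω) p P := by
  rcases s.eq_empty_or_nonempty with rfl | hs
  · simpa using memLp_const 1
  have h_card : (s.card : ENNReal) ≠ 0 := by exact_mod_cast hs.card_ne_zero
  have h_card_top : (s.card : ENNReal) ≠ ⊤ := ENNReal.natCast_ne_top _
  have h_holder : (∑ _i ∈ s, (s.card * p)⁻¹)⁻¹ = p := by
    rw [Finset.sum_const, nsmul_eq_mul, ENNReal.mul_inv (b := p) (.inl h_card) (.inl h_card_top),
      ← mul_assoc, ENNReal.mul_inv_cancel h_card h_card_top, one_mul, inv_inv]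
  simpa only [h_holder] using
    MemLp.prod' fun i hi ↦ hf i hi (s.card * p) (ENNReal.mul_ne_top h_card_top hp)

variable {ι : Type*} {X : ι → Ω → ℝ}

lemma strongDual_pi_apply [Fintype ι] (L : StrongDual ℝ (ι → ℝ)) (y : ι → ℝ) :
    L y = ∑ j, L (Pi.single j 1) * y j := by
  conv_lhs => rw [pi_eq_sum_univ' y]
  simp only [map_sum, map_smul, smul_eq_mul, mul_comm]

lemma covariance_comp_strongDual_pi [Finite ι] [IsFiniteMeasure P] {U : Ω → ℝ} (hU : MemLp U 2 P)
    (hX : ∀ j, MemLp (X j) 2 P) (L : StrongDual ℝ (ι → ℝ)) :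
    cov[U, L ∘ fun ω j ↦ X j ω; P] = L fun j ↦ cov[U, X j; P] := by
  have := Fintype.ofFinite ι
  have h_comp : (L ∘ fun ω j ↦ X j ω) = fun ω ↦ ∑ j, L (Pi.single j 1) * X j ω :=
    funext fun ω ↦ strongDual_pi_apply L _
  rw [h_comp, covariance_fun_sum_right (fun j ↦ (hX j).const_mul _) hU, strongDual_pi_apply]
  simp only [covariance_const_mul_right]

theorem integral_sub_mul_prod_of_hasGaussianLaw [Finite ι] [DecidableEq ι]
    (hX : HasGaussianLaw (fun ω j ↦ X j ω) P) (i : ι) (s : Finset ι) :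
    ∫ ω, (X i ω - P[X i]) * ∏ j ∈ s, X j ω ∂P =
      ∑ j ∈ s, cov[X i, X j; P] * ∫ ω, ∏ k ∈ s.erase j, X k ω ∂P := by
  have := Fintype.ofFinite ι
  have := hX.isProbabilityMeasure
  have h_memLp (j : ι) (q : ENNReal) (hq : q ≠ ⊤) : MemLp (X j) q P := (hX.eval j).memLp hq
  have h_prod (t : Finset ι) : MemLp (fun ω ↦ ∏ j ∈ t, X j ω) 2 P :=
    memLp_finsetProd_of_forall_memLp (fun j _ ↦ h_memLp j) (by simp)
  have h_int (t : Finset ι) : Integrable (fun ω ↦ ∏ j ∈ t, X j ω) P :=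
    (h_prod t).integrable (by simp)
  have h_pair : HasGaussianLaw (fun ω ↦ (X i ω, fun j ↦ X j ω)) P :=
    hX.map_fun ((ContinuousLinearMap.proj i).prod (.id ℝ (ι → ℝ)))
  have hF (y : ι → ℝ) := hasFDerivAt_finsetProd (𝕜 := ℝ) (u := s) (x := y)
  have h_deriv (y : ι → ℝ) : fderiv ℝ (fun y : ι → ℝ ↦ ∏ j ∈ s, y j) y
      (fun j ↦ cov[X i, X j; P]) = ∑ j ∈ s, cov[X i, X j; P] * ∏ k ∈ s.erase j, y k := by
    simp [(hF y).fderiv, mul_comm]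
  have h_int_term (j : ι) :
      Integrable (fun ω ↦ cov[X i, X j; P] * ∏ k ∈ s.erase j, X k ω) P :=
    (h_int (s.erase j)).const_mul _
  rw [integral_sub_mul_comp_of_hasGaussianLaw h_pair
    (covariance_comp_strongDual_pi (h_memLp i 2 (by simp)) fun j ↦ h_memLp j 2 (by simp))
    (fun y ↦ (hF y).differentiableAt) (h_int s)
    (((h_memLp i 2 (by simp)).sub (memLp_const _)).integrable_mul (h_prod s))
    (by simpa only [h_deriv] using integrable_finsetSum _ fun j _ ↦ h_int_term j)]
  simp only [h_deriv]
  rw [integral_finsetSum _ fun j _ ↦ h_int_term j]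
  simp only [integral_const_mul]

theorem integral_prod_eq_pairingSum [Fintype ι] [LinearOrder ι]
    (hX : HasGaussianLaw (fun ω j ↦ X j ω) P) (hX_mean : ∀ i, P[X i] = 0) (s : Finset ι) :
    ∫ ω, ∏ i ∈ s, X i ω ∂P = pairingSum (fun k l ↦ ∫ ω, X k ω * X l ω ∂P) s := by
  have := hX.isProbabilityMeasure
  induction s using Finset.strongInduction with
  | H s ih =>
    rcases s.eq_empty_or_nonempty with rfl | hs
    · simp [pairingSum_empty]
    set i := s.min' hs
    have hi : i ∈ s := s.min'_mem hs
    calc ∫ ω, ∏ i ∈ s, X i ω ∂P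
        = ∫ ω, (X i ω - P[X i]) * ∏ j ∈ s.erase i, X j ω ∂P := by
          simp_rw [hX_mean, sub_zero, ← Finset.mul_prod_erase s _ hi]
      _ = ∑ j ∈ s.erase i, cov[X i, X j; P] *
            ∫ ω, ∏ k ∈ (s.erase i).erase j, X k ω ∂P :=
          integral_sub_mul_prod_of_hasGaussianLaw hX i (s.erase i)
      _ = ∑ j ∈ s.erase i, (∫ ω, X i ω * X j ω ∂P) *
            pairingSum (fun k l ↦ ∫ ω, X k ω * X l ω ∂P) ((s.erase i).erase j) := by
          refine Finset.sum_congr rfl fun j hj ↦ ?_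
          rw [ih _ ((Finset.erase_ssubset hj).trans (Finset.erase_ssubset hi)), covariance]
          simp only [hX_mean, sub_zero]
      _ = pairingSum (fun k l ↦ ∫ ω, X k ω * X l ω ∂P) s := by
          rw [pairingSum_eq_sum_erase _ hi fun j hj ↦ s.min'_lt_of_mem_erase_min' hs hj]

lemma hasGaussianLaw_pi_of_forall_sum [Fintype ι]
    (hX : ∀ c : ι → ℝ, HasGaussianLaw (fun ω ↦ ∑ i, c i * X i ω) P) :
    HasGaussianLaw (fun ω i ↦ X i ω) P := by
  have hX_meas (i : ι) : AEMeasurable (X i) P := by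
    simpa [Pi.single_apply] using (hX (Pi.single i 1)).aemeasurable
  refine ⟨isGaussian_of_isGaussian_map fun L ↦ ?_⟩
  rw [AEMeasurable.map_map_of_aemeasurable L.continuous.aemeasurable
    (aemeasurable_pi_lambda _ hX_meas)]
  simpa only [Function.comp_def, ← strongDual_pi_apply] using
    (hX fun i ↦ L (Pi.single i 1)).isGaussian_map

end Moments

theorem stmt17_general {Ω ι : Type*} [MeasurableSpace Ω] {μ : Measure Ω} [Fintype ι]
    [LinearOrder ι] {ξ : ι → Ω → ℝ}
    (hgauss : ∀ c : ι → ℝ, ∃ v : NNReal,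
      μ.map (fun ω ↦ ∑ i, c i * ξ i ω) = gaussianReal 0 v) :
    ∫ ω, ∏ i, ξ i ω ∂μ =
      ∑ π : Equiv.Perm ι with π * π = 1 ∧ ∀ k, π k ≠ k,
        ∏ k with k < π k, ∫ ω, ξ k ω * ξ (π k) ω ∂μ := by
  choose v hv using hgauss
  have h_law (c : ι → ℝ) : HasLaw (fun ω ↦ ∑ i, c i * ξ i ω) (gaussianReal 0 (v c)) μ :=
    ⟨.of_map_ne_zero (hv c ▸ IsProbabilityMeasure.ne_zero _), hv c⟩
  have h_joint : HasGaussianLaw (fun ω i ↦ ξ i ω) μ :=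
    hasGaussianLaw_pi_of_forall_sum fun c ↦ (h_law c).hasGaussianLaw
  have h_mean (i : ι) : μ[ξ i] = 0 := by
    simpa [Pi.single_apply] using (h_law (Pi.single i 1)).integral_eq
  rw [integral_prod_eq_pairingSum h_joint h_mean, pairingSum, pairings_univ]
  rfl

/-- Wick/Isserlis formula: the expectation of a product of jointly centered
Gaussian random variables is the sum over pairings of the products of
covariances.  Joint centered Gaussianity is expressed by requiring every
linear combination to be a centered Gaussian. -/
theorem stmt17 {Ω : Type*} [MeasurableSpace Ω] (μ : Measure Ω)
    [IsProbabilityMeasure μ] (n : ℕ) (ξ : Fin n → Ω → ℝ)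
    (hmeas : ∀ i, Measurable (ξ i))
    (hgauss : ∀ c : Fin n → ℝ, ∃ v : NNReal,
      μ.map (fun ω => ∑ i, c i * ξ i ω) = gaussianReal 0 v) :
    ∫ ω, ∏ i, ξ i ω ∂μ =
      ∑ π ∈ Finset.univ.filter
          (fun π : Equiv.Perm (Fin n) => π * π = 1 ∧ ∀ k, π k ≠ k),
        ∏ k ∈ Finset.univ.filter (fun k : Fin n => k < π k),
          ∫ ω, ξ k ω * ξ (π k) ω ∂μ := by
  convert stmt17_general hgauss
end
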